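/- Let L be an ideal lattice and let L' ⊆ L be a subset such that inf A ∈ L' for every A ⊆ L' and sup A ∈ L' for every directed A ⊆ L'. Define π : L → L' by π(a) = inf{a' ∈ L' : a ≤ a'}, and assume π(a·π(b)) = π(ab) = π(π(a)·b) for all a, b ∈ L. Then L', with the induced partial order and the multiplication a · b = π(ab), is itself an ideal lattice; in particular L' is a complete, compactly generated lattice whose suprema are given by sup_{L'} A = inf{a' ∈ L' : a ≤ a' for all a ∈ A}, and the compact elements of L' are exactly the elements π(a) with a compact in L. -/

import Mathlib

open CompleteLattice TopologicalSpace

/-- An ideal lattice: a complete, compactly generated lattice with an associative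
multiplication distributing over finite suprema, for which `⊤` is a compact
two-sided identity and products of compact elements are compact. -/
structure IsIdealLattice (α : Type*) [CompleteLattice α] [Mul α] : Prop where
  mul_assoc : ∀ a b c : α, a * b * c = a * (b * c)
  compactlyGenerated : ∀ a : α, a = sSup {b : α | b ≤ a ∧ IsCompactElement b}
  mul_sup : ∀ a b c : α, a * (b ⊔ c) = a * b ⊔ a * c
  sup_mul : ∀ a b c : α, (a ⊔ b) * c = a * c ⊔ b * c
  top_compact : IsCompactElement (⊤ : α)
  top_mul : ∀ a : α, ⊤ * a = a
  mul_top : ∀ a : α, a * ⊤ = a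
  compact_mul : ∀ a b : α, IsCompactElement a → IsCompactElement b → IsCompactElement (a * b)

/-- A prime element of an ideal lattice: `p ≠ ⊤` and `a * b ≤ p` implies `a ≤ p` or `b ≤ p`. -/
def IsPrimeElt {α : Type*} [CompleteLattice α] [Mul α] (p : α) : Prop :=
  p ≠ ⊤ ∧ ∀ a b : α, a * b ≤ p → a ≤ p ∨ b ≤ p

/-- A semi-prime element of an ideal lattice: `b * b ≤ a` implies `b ≤ a`. -/
def IsSemiprimeElt {α : Type*} [CompleteLattice α] [Mul α] (a : α) : Prop :=
  ∀ b : α, b * b ≤ a → b ≤ a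

namespace GaloisInsertion

variable {α β : Type*} [CompleteLattice α] [CompleteLattice β] {l : α → β} {u : β → α}

/-- If the right adjoint preserves directed suprema, the left adjoint preserves compactness. -/
theorem isCompactElement_l (gi : GaloisInsertion l u)
    (hu : ∀ s : Set β, s.Nonempty → DirectedOn (· ≤ ·) s → u (sSup s) = sSup (u '' s))
    {a : α} (ha : IsCompactElement a) : IsCompactElement (l a) := by
  intro s b hs hdir hb hab
  have hdir' : DirectedOn (· ≤ ·) (u '' s) := hdir.mono_comp gi.gc.monotone_u
  obtain rfl := hb.sSup_eq
  rw [gi.gc.le_iff_le, hu s hs hdir] at hab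
  obtain ⟨_, ⟨x, hx, rfl⟩, hax⟩ := ha _ _ (hs.image u) hdir' (_root_.isLUB_sSup _) hab
  exact ⟨x, hx, gi.gc.l_le hax⟩

theorem eq_sSup_l_image_compact (gi : GaloisInsertion l u)
    (hα : ∀ a : α, a = sSup {b : α | b ≤ a ∧ IsCompactElement b}) (x : β) :
    x = sSup (l '' {b : α | b ≤ u x ∧ IsCompactElement b}) := by
  rw [sSup_image, ← gi.gc.l_sSup, ← hα, gi.l_u_eq]

/-- If the right adjoint preserves directed suprema and the source is compactly generated, the
compact elements of the target are the images of the compact elements of the source. -/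
theorem isCompactElement_iff_exists (gi : GaloisInsertion l u)
    (hu : ∀ s : Set β, s.Nonempty → DirectedOn (· ≤ ·) s → u (sSup s) = sSup (u '' s))
    (hα : ∀ a : α, a = sSup {b : α | b ≤ a ∧ IsCompactElement b}) (c : β) :
    IsCompactElement c ↔ ∃ a, IsCompactElement a ∧ c = l a := by
  refine ⟨fun hc ↦ ?_, ?_⟩
  · obtain ⟨t₀, ht₀, hct⟩ := (isCompactElement_iff_exists_le_sSup_of_le_sSup β c).1 hc _
      (gi.eq_sSup_l_image_compact hα c).le
    classical
    obtain ⟨t, ht, rfl⟩ := Finset.subset_set_image_iff.1 ht₀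
    refine ⟨t.sup id, isCompactElement_finsetSup t fun x hx ↦ (ht hx).2, le_antisymm ?_ ?_⟩
    · refine hct.trans ?_
      rw [Finset.sup_image]
      exact Finset.sup_le fun x hx ↦ gi.gc.monotone_l (Finset.le_sup (f := id) hx)
    · exact gi.gc.l_le (Finset.sup_le fun x hx ↦ (ht hx).1)
  · rintro ⟨a, ha, rfl⟩
    exact gi.isCompactElement_l hu ha

end GaloisInsertion

/-- Ideal lattices are transported along multiplicative Galois insertions whose right adjoint
preserves directed suprema. -/
theorem IsIdealLattice.of_galoisInsertion {α β : Type*} [CompleteLattice α] [CompleteLattice β]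
    [Mul α] [Mul β] {l : α → β} {u : β → α} (hα : IsIdealLattice α) (gi : GaloisInsertion l u)
    (hu : ∀ s : Set β, s.Nonempty → DirectedOn (· ≤ ·) s → u (sSup s) = sSup (u '' s))
    (hmul : ∀ a b, l (a * b) = l a * l b) : IsIdealLattice β where
  mul_assoc := gi.l_surjective.forall₃.2 fun a b c ↦ by simp only [← hmul, hα.mul_assoc]
  compactlyGenerated x := by
    refine le_antisymm ?_ (sSup_le fun b hb ↦ hb.1)
    refine (gi.eq_sSup_l_image_compact hα.compactlyGenerated x).trans_le (sSup_le_sSup ?_)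
    rintro _ ⟨b, ⟨hbx, hb⟩, rfl⟩
    exact ⟨gi.gc.l_le hbx, gi.isCompactElement_l hu hb⟩
  mul_sup := gi.l_surjective.forall₃.2 fun a b c ↦ by
    simp only [← hmul, ← gi.gc.l_sup, hα.mul_sup]
  sup_mul := gi.l_surjective.forall₃.2 fun a b c ↦ by
    simp only [← hmul, ← gi.gc.l_sup, hα.sup_mul]
  top_compact := gi.l_top ▸ gi.isCompactElement_l hu hα.top_compact
  top_mul := gi.l_surjective.forall.2 fun a ↦ by rw [← gi.l_top, ← hmul, hα.top_mul]
  mul_top := gi.l_surjective.forall.2 fun a ↦ by rw [← gi.l_top, ← hmul, hα.mul_top]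
  compact_mul x y hx hy := by
    obtain ⟨a, ha, rfl⟩ := (gi.isCompactElement_iff_exists hu hα.compactlyGenerated x).1 hx
    obtain ⟨b, hb, rfl⟩ := (gi.isCompactElement_iff_exists hu hα.compactlyGenerated y).1 hy
    exact hmul a b ▸ gi.isCompactElement_l hu (hα.compact_mul a b ha hb)

/-- Let `L` be an ideal lattice and `L' ⊆ L` closed under arbitrary infima and directed
suprema; let `π(a) = inf {a' ∈ L' : a ≤ a'}` and assume
`π(a·π(b)) = π(ab) = π(π(a)·b)`. Then `L'`, with the induced order and multiplication
`a · b = π(ab)`, is an ideal lattice; its suprema are `sup A = inf {a' ∈ L' : ∀ a ∈ A, a ≤ a'}`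
and its compact elements are exactly the `π(a)` with `a` compact in `L`. -/
theorem sublattice_isIdealLattice {α : Type*} [CompleteLattice α] [Mul α]
    (hL : IsIdealLattice α) (L' : Set α)
    (hInf : ∀ A : Set α, A ⊆ L' → sInf A ∈ L')
    (hSup : ∀ A : Set α, A ⊆ L' → A.Nonempty → DirectedOn (· ≤ ·) A → sSup A ∈ L')
    (hπ : ∀ a b : α,
      sInf {x | x ∈ L' ∧ a * sInf {y | y ∈ L' ∧ b ≤ y} ≤ x} =
        sInf {x | x ∈ L' ∧ a * b ≤ x} ∧
      sInf {x | x ∈ L' ∧ a * b ≤ x} =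
        sInf {x | x ∈ L' ∧ sInf {y | y ∈ L' ∧ a ≤ y} * b ≤ x}) :
    ∃ (cl : CompleteLattice {x // x ∈ L'}) (m : Mul {x // x ∈ L'}),
      letI := cl
      letI := m
      (∀ x y : {x // x ∈ L'}, x ≤ y ↔ (x : α) ≤ (y : α)) ∧
      (∀ x y : {x // x ∈ L'},
        ((x * y : {x // x ∈ L'}) : α) = sInf {z | z ∈ L' ∧ (x : α) * (y : α) ≤ z}) ∧
      (∀ A : Set {x // x ∈ L'},
        ((sSup A : {x // x ∈ L'}) : α) =
          sInf {a' | a' ∈ L' ∧ ∀ a ∈ A, (a : α) ≤ a'}) ∧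
      IsIdealLattice {x // x ∈ L'} ∧
      (∀ c : {x // x ∈ L'}, IsCompactElement c ↔
        ∃ a : α, IsCompactElement a ∧ (c : α) = sInf {z | z ∈ L' ∧ a ≤ z}) := by
  let π : α → {x // x ∈ L'} := fun a ↦ ⟨sInf {x | x ∈ L' ∧ a ≤ x}, hInf _ fun _ hx ↦ hx.1⟩
  have gc : GaloisConnection π Subtype.val := fun a x ↦
    ⟨fun h ↦ (le_sInf fun _ hy ↦ hy.2).trans h, fun h ↦ sInf_le ⟨x.2, h⟩⟩
  let gi : GaloisInsertion π Subtype.val := gc.toGaloisInsertion fun x ↦ gc.le_u_l x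
  let cl : CompleteLattice {x // x ∈ L'} := gi.liftCompleteLattice
  let m : Mul {x // x ∈ L'} := ⟨fun x y ↦ π (x * y)⟩
  have hu : ∀ s : Set {x // x ∈ L'}, s.Nonempty → DirectedOn (· ≤ ·) s →
      ((sSup s : {x // x ∈ L'}) : α) = sSup (Subtype.val '' s) := by
    intro s hs hdir
    have hmem := hSup (Subtype.val '' s) (by rintro _ ⟨x, -, rfl⟩; exact x.2) (hs.image _)
      (hdir.mono_comp gc.monotone_u)
    exact congrArg Subtype.val (gi.l_u_eq ⟨_, hmem⟩)
  have hmul : ∀ a b, π (a * b) = π a * π b := fun a b ↦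
    Subtype.ext ((hπ a b).2.trans (hπ (π a) b).1.symm)
  refine ⟨cl, m, fun _ _ ↦ Iff.rfl, fun _ _ ↦ rfl, fun A ↦ ?_, hL.of_galoisInsertion gi hu hmul,
    fun c ↦ ?_⟩
  · change sInf {x | x ∈ L' ∧ sSup (Subtype.val '' A) ≤ x} = _
    simp only [sSup_le_iff, Set.forall_mem_image]
  · simp only [gi.isCompactElement_iff_exists hu hL.compactlyGenerated, Subtype.ext_iff, π]
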